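/- Let α∈(0,1/2] and let F satisfy the regular right tail condition (with exponent α). Suppose there is a non-decreasing M∈ℛ_β with β∈[1−2α,1] such that, as x→∞, ω(x)≪x/M(x) and x/M(x)=o(ℓ(x)²). Let g₀(x)=ℓ(x)·√(M(x)/x). Then for every ε∈(0,1/(1+α+β)), every θ>0, and every non-decreasing L∈ℛ with L(x)→∞ and L(x)≪g₀(x)^ε, one has lim_{x→∞} (x/ℓ(x))·∑_{n<L(x)} sup_{t≥θx} F^{*n}((t,t+h]) = 0. -/

import Mathlib

open MeasureTheory Filter Set Real Asymptotics

attribute [local instance] Classical.propDecidable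

noncomputable section

namespace SRT

/-- Convolution of two measures on `ℝ`. -/
def mconv (μ ν : Measure ℝ) : Measure ℝ := μ.bind fun x => ν.map fun y => x + y

/-- `n`-fold self-convolution of `μ`, with the 0-th power the unit mass at `0`. -/
def convPow (μ : Measure ℝ) : ℕ → Measure ℝ
  | 0 => Measure.dirac 0
  | n + 1 => mconv (convPow μ n) μ

/-- The renewal measure `U = ∑ₙ F^{*n}`. -/
def renewal (μ : Measure ℝ) : Measure ℝ := Measure.sum fun n => convPow μ n

/-- Right tail `F̄(x) = μ((x,∞))`. -/
def rtail (μ : Measure ℝ) (x : ℝ) : ℝ := (μ (Set.Ioi x)).toReal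

/-- `f` is strictly positive on `(0,∞)` and regularly varying at `∞` with exponent `β`. -/
def RegVary (f : ℝ → ℝ) (β : ℝ) : Prop :=
  (∀ x > 0, 0 < f x) ∧
    ∀ c > 0, Tendsto (fun x => f (c * x) / f x) atTop (nhds (c ^ β))

/-- `f` is regularly varying at `∞` with some exponent. -/
def RegVaryAny (f : ℝ → ℝ) : Prop := ∃ β : ℝ, RegVary f β

/-- Regular right tail condition: `F̄(x) ∼ 1/ℓ(x)` as `x → ∞`. -/
def RightTail (μ : Measure ℝ) (ℓ : ℝ → ℝ) : Prop :=
  Tendsto (fun x => rtail μ x * ℓ x) atTop (nhds 1)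

/-- Converging tail ratio condition: `F(-x)/F̄(x)` converges to a finite limit. -/
def TailRatio (μ : Measure ℝ) : Prop :=
  ∃ p : ℝ, Tendsto (fun x => (μ (Set.Iic (-x))).toReal / rtail μ x) atTop (nhds p)

/-- `μ` is concentrated on `dℤ`. -/
def ConcOn (μ : Measure ℝ) (d : ℝ) : Prop := μ {x : ℝ | ∃ k : ℤ, x = k * d} = 1

/-- `μ` is arithmetic. -/
def Arith (μ : Measure ℝ) : Prop := ∃ d > 0, ConcOn μ d

/-- `h` is admissible: any positive number if `μ` is non-arithmetic, and
the span of `μ` if `μ` is arithmetic. -/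
def SpanOK (μ : Measure ℝ) (h : ℝ) : Prop :=
  0 < h ∧ (¬ Arith μ ∨ (ConcOn μ h ∧ ∀ d > 0, ConcOn μ d → d ≤ h))

/-- `μ` is concentrated on `a + dℤ`. -/
def ConcOnLat (μ : Measure ℝ) (a d : ℝ) : Prop :=
  μ {x : ℝ | ∃ k : ℤ, x = a + k * d} = 1

/-- `μ` is lattice. -/
def IsLattice (μ : Measure ℝ) : Prop := ∃ a d : ℝ, 0 ≤ a ∧ a < d ∧ ConcOnLat μ a d

/-- `h` is admissible: any positive number if `μ` is non-lattice, and
the span of `μ` if `μ` is lattice. -/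
def LatSpanOK (μ : Measure ℝ) (h : ℝ) : Prop :=
  0 < h ∧ (¬ IsLattice μ ∨
    ((∃ a, 0 ≤ a ∧ a < h ∧ ConcOnLat μ a h) ∧
      ∀ a d : ℝ, 0 ≤ a → a < d → ConcOnLat μ a d → d ≤ h))

/-- Generalized inverse `ℓ⁻(x) = inf {t ≥ 1 : ℓ(t) > x}`. -/
def linv (ℓ : ℝ → ℝ) (x : ℝ) : ℝ := sInf {t : ℝ | 1 ≤ t ∧ x < ℓ t}

/-- `ω(x) = x F((x,x+h]) / F̄(x)`. -/
def omegaFn (μ : Measure ℝ) (h x : ℝ) : ℝ :=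
  x * (μ (Set.Ioc x (x + h))).toReal / rtail μ x

/-- `I_η(x,T) = ∫_{(1-η)x}^x (ω(y)-T)⁺ dy`. -/
def Iof (μ : Measure ℝ) (h η x T : ℝ) : ℝ :=
  ∫ y in (1 - η) * x..x, max (omegaFn μ h y - T) 0

/-- `Î_{η,n,r}(x,T) = ∫_{(1-η)x}^x e^{-(x-y)/(r aₙ)} (ω(y)-T)⁺ dy`. -/
def IofHat (μ : Measure ℝ) (ℓ : ℝ → ℝ) (h η : ℝ) (n : ℕ) (r x T : ℝ) : ℝ :=
  ∫ y in (1 - η) * x..x,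
    Real.exp (-(x - y) / (r * linv ℓ (n : ℝ))) * max (omegaFn μ h y - T) 0

/-- `Sₙ/aₙ` converges in distribution to a law with density `g`. -/
def StableLimit (F : Measure ℝ) (ℓ : ℝ → ℝ) (g : ℝ → ℝ) : Prop :=
  ∀ f : BoundedContinuousFunction ℝ ℝ,
    Tendsto (fun n : ℕ =>
        ∫ x, f x ∂((convPow F n).map fun y => y / linv ℓ (n : ℝ))) atTop
      (nhds (∫ x, f x * g x))

/-- `Sₙ/aₙ` converges in distribution to the law `μζ`. -/
def WeakLimit (F : Measure ℝ) (ℓ : ℝ → ℝ) (μζ : Measure ℝ) : Prop :=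
  ∀ f : BoundedContinuousFunction ℝ ℝ,
    Tendsto (fun n : ℕ =>
        ∫ x, f x ∂((convPow F n).map fun y => y / linv ℓ (n : ℝ))) atTop
      (nhds (∫ x, f x ∂μζ))

/-- The law `μ` is stable: for each `n`, the `n`-fold convolution is the law of
`cₙ X + dₙ` for some `cₙ > 0`, `dₙ`. -/
def IsStable (μ : Measure ℝ) : Prop :=
  ∀ n : ℕ, 0 < n → ∃ c : ℝ, 0 < c ∧ ∃ d : ℝ, convPow μ n = μ.map fun x => c * x + d

/-- The strong renewal theorem:
`x F̄(x) U((x,x+h]) → α h ∫₀^∞ t^{-α} g(t) dt`. -/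
def SRTholds (F : Measure ℝ) (h α : ℝ) (g : ℝ → ℝ) : Prop :=
  Tendsto (fun x : ℝ => x * rtail F x * ((renewal F) (Set.Ioc x (x + h))).toReal)
    atTop (nhds (α * h * ∫ t in Set.Ioi (0:ℝ), t ^ (-α) * g t))

variable {Ω : Type*} [MeasurableSpace Ω]

/-- Partial sums `Sₙ = X₁ + ⋯ + Xₙ`. -/
def pSum (X : ℕ → Ω → ℝ) (n : ℕ) (ω : Ω) : ℝ := ∑ i ∈ Finset.range n, X i ω

/-- `X` is an i.i.d. sequence with common law `F` under `P`. -/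
def IIDseq (P : Measure Ω) (F : Measure ℝ) (X : ℕ → Ω → ℝ) : Prop :=
  (∀ i, Measurable (X i)) ∧ (∀ i, P.map (X i) = F) ∧
    ProbabilityTheory.iIndepFun X P

/-- `Nₙ = #{i ≤ n : Xᵢ > 0}`. -/
def Ncount (X : ℕ → Ω → ℝ) (n : ℕ) (ω : Ω) : ℕ :=
  ((Finset.range n).filter fun i => 0 < X i ω).card

/-- `Sₙ⁻ = ∑_{i ≤ n} Xᵢ⁻`. -/
def sMinus (X : ℕ → Ω → ℝ) (n : ℕ) (ω : Ω) : ℝ :=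
  ∑ i ∈ Finset.range n, max (-(X i ω)) 0

/-- The quantity `R_{T,η,r,c₁,c₂}(x,δ)` of Theorem `t:sum-small-n`, with
`xₙ = x + Sₙ⁻` and `κ = ⌊1/α⌋`. -/
def Rquant (F : Measure ℝ) (ℓ : ℝ → ℝ) (h α : ℝ) (P : Measure Ω) (X : ℕ → Ω → ℝ)
    (L : ℝ → ℝ) (T η r c₁ c₂ x δ : ℝ) : ℝ :=
  (x / ℓ x) * ∑ n ∈ Finset.Ico ⌈L x⌉₊ ⌈ℓ (δ * x)⌉₊,
    ∫ ω, ((Ncount X n ω : ℝ) / linv ℓ ((Ncount X n ω : ℕ) : ℝ)) *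
        (rtail F (x + sMinus X n ω) / (x + sMinus X n ω)) *
        sSup ((fun t => IofHat F ℓ h η (Ncount X n ω) r t T) ''
          Set.Icc (c₁ * (x + sMinus X n ω) / (⌊1/α⌋₊ : ℝ))
            (c₂ * (x + sMinus X n ω) + 2 * h)) ∂P

/-- Strict ascending ladder epochs. -/
def ladderTime (X : ℕ → Ω → ℝ) : ℕ → Ω → ℕ
  | 0 => fun _ => 0
  | k + 1 => fun ω =>
      sInf {n : ℕ | ladderTime X k ω < n ∧ pSum X (ladderTime X k ω) ω < pSum X n ω}

/-- Strict ascending ladder heights `H_k`. -/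
def ladderHeight (X : ℕ → Ω → ℝ) (k : ℕ) (ω : Ω) : ℝ := pSum X (ladderTime X k ω) ω

/-- Weak descending ladder epochs (weak ascending epochs of `-S`). -/
def wLadderTimeDesc (X : ℕ → Ω → ℝ) : ℕ → Ω → ℕ
  | 0 => fun _ => 0
  | k + 1 => fun ω =>
      sInf {n : ℕ | wLadderTimeDesc X k ω < n ∧
        pSum X n ω ≤ pSum X (wLadderTimeDesc X k ω) ω}

/-- Weak descending ladder heights (ladder heights of the walk `-S`). -/
def wLadderHeightDesc (X : ℕ → Ω → ℝ) (k : ℕ) (ω : Ω) : ℝ :=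
  - pSum X (wLadderTimeDesc X k ω) ω

/-- `X_{n:k}`, the `k`-th largest among `X₁,…,Xₙ`; by convention `0` if `k > n`. -/
def ordStat (X : ℕ → Ω → ℝ) (n k : ℕ) (ω : Ω) : ℝ :=
  sSup {t : ℝ | k ≤ ((Finset.range n).filter fun i => t ≤ X i ω).card}

/-- `S_{n:k} = X_{n:1} + ⋯ + X_{n:k}`. -/
def topSum (X : ℕ → Ω → ℝ) (n k : ℕ) (ω : Ω) : ℝ :=
  ∑ j ∈ Finset.Icc 1 k, ordStat X n j ω

/-- `ζ_{n,x} = aₙ^{1-γ} x^γ`. -/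
def zetaCut (ℓ : ℝ → ℝ) (γ : ℝ) (n : ℕ) (x : ℝ) : ℝ :=
  (linv ℓ (n : ℝ)) ^ (1 - γ) * x ^ γ

/-- The event `E_{n,k,x} = {Sₙ ∈ (x,x+h], X_{n:k} > ζ_{n,x} ≥ X_{n:k+1}}`,
with the convention `X_{n:0} = ∞`. -/
def Eevent (X : ℕ → Ω → ℝ) (ℓ : ℝ → ℝ) (h γ : ℝ) (n k : ℕ) (x : ℝ) : Set Ω :=
  {ω | pSum X n ω ∈ Set.Ioc x (x + h) ∧
    (k = 0 ∨ zetaCut ℓ γ n x < ordStat X n k ω) ∧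
    ordStat X n (k + 1) ω ≤ zetaCut ℓ γ n x}

end SRT

open SRT

/-- Convolution as the image of the product measure under addition. -/
lemma SRT.mconv_apply (μ ν : Measure ℝ) [SFinite ν] {s : Set ℝ} (hs : MeasurableSet s) :
    mconv μ ν s = (μ.prod ν) ((fun p : ℝ × ℝ => p.1 + p.2) ⁻¹' s) := by
  have hmeas : Measurable fun x : ℝ => ν.map fun y => x + y := by
    have h1 : Measurable fun x : ℝ => ν.map (Prod.mk x) := Measurable.map_prodMk_left
    have h2 := (Measure.measurable_map (fun p : ℝ × ℝ => p.1 + p.2) measurable_add).comp h1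
    convert h2 using 2 with x
    simp only [Function.comp_apply]
    rw [Measure.map_map measurable_add measurable_prodMk_left]
    rfl
  rw [mconv, Measure.bind_apply hs hmeas.aemeasurable, Measure.prod_apply (measurable_add hs)]
  refine lintegral_congr fun x => ?_
  rw [Measure.map_apply (measurable_const_add x) hs]
  rfl

instance SRT.isProbabilityMeasure_convPow (F : Measure ℝ) [IsProbabilityMeasure F] (n : ℕ) :
    IsProbabilityMeasure (convPow F n) := by
  induction n with
  | zero => exact Measure.dirac.isProbabilityMeasure
  | succ n ih =>
    refine ⟨?_⟩
    rw [convPow, mconv_apply _ _ MeasurableSet.univ, preimage_univ]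
    exact measure_univ

/-- If `S_n` lies in `(t, t + h]` with `t ≥ n * a`, then some summand exceeds `a`; conditioning on
the remaining summands gives a union bound. -/
lemma SRT.convPow_Ioc_le (F : Measure ℝ) [IsProbabilityMeasure F] (h a : ℝ) (c : ENNReal)
    (hc : ∀ s, a - h ≤ s → F (Ioc s (s + h)) ≤ c) (n : ℕ) :
    ∀ t : ℝ, n * a ≤ t → convPow F n (Ioc t (t + h)) ≤ n * c := by
  induction n with
  | zero =>
    intro t ht
    have h0 : (0 : ℝ) ∉ Ioc t (t + h) := fun hm => by
      have := hm.1
      simp at ht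
      linarith
    simp [convPow, Measure.dirac_apply' _ measurableSet_Ioc, h0]
  | succ n ih =>
    intro t ht
    push_cast at ht ⊢
    rw [convPow, mconv_apply _ _ measurableSet_Ioc]
    set A : Set (ℝ × ℝ) := (fun p : ℝ × ℝ => p.1 + p.2) ⁻¹' Ioc t (t + h)
    have hA : MeasurableSet A := measurable_add measurableSet_Ioc
    have hB : MeasurableSet {p : ℝ × ℝ | p.2 ≤ a} :=
      measurableSet_le measurable_snd measurable_const
    rw [← measure_inter_add_sdiff A hB, add_mul, one_mul]
    refine add_le_add ?_ ?_
    · rw [Measure.prod_apply_symm (hA.inter hB)]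
      refine (lintegral_mono (g := fun _ => (n : ENNReal) * c) fun x => ?_).trans (by simp)
      by_cases hx : x ≤ a
      · refine (measure_mono fun y hy => ?_).trans (ih (t - x) (by linarith))
        have h1 : t < y + x ∧ y + x ≤ t + h := hy.1
        exact ⟨by linarith [h1.1], by linarith [h1.2]⟩
      · have hempty : (fun y => (y, x)) ⁻¹' (A ∩ {p : ℝ × ℝ | p.2 ≤ a}) = ∅ :=
          eq_empty_of_forall_notMem fun y hy => hx hy.2
        simp [hempty]
    · rw [Measure.prod_apply (hA.diff hB)]
      refine (lintegral_mono (g := fun _ => c) fun x => ?_).trans (by simp)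
      by_cases hx : a - h ≤ t - x
      · refine (measure_mono fun y hy => ?_).trans (hc (t - x) hx)
        have h1 : t < x + y ∧ x + y ≤ t + h := hy.1
        exact ⟨by linarith [h1.1], by linarith [h1.2]⟩
      · have hempty : Prod.mk x ⁻¹' (A \ {p : ℝ × ℝ | p.2 ≤ a}) = ∅ := by
          refine eq_empty_of_forall_notMem fun y hy => ?_
          have h1 : t < x + y ∧ x + y ≤ t + h := hy.1
          have h2 : ¬ y ≤ a := hy.2
          push Not at hx h2
          linarith [h1.2]
        simp [hempty]

/-- A Potter-type upper bound for monotone functions with a doubling limit. -/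
lemma SRT.exists_potter_bound {f : ℝ → ℝ} {p γ : ℝ} (hmono : MonotoneOn f (Ioi 0))
    (hpos : ∀ x > 0, 0 < f x)
    (hlim : Tendsto (fun x => f (2 * x) / f x) atTop (nhds ((2 : ℝ) ^ p)))
    (hpγ : p < γ) (hγ : 0 ≤ γ) :
    ∃ X > 0, ∀ y ≥ X, ∀ r ≥ (1 : ℝ), f (r * y) ≤ (2 * r) ^ γ * f y := by
  have hlt : (2 : ℝ) ^ p < 2 ^ γ := Real.rpow_lt_rpow_of_exponent_lt one_lt_two hpγ
  obtain ⟨X₀, hX₀⟩ := eventually_atTop.1 (hlim.eventually_lt_const hlt)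
  refine ⟨max X₀ 1, by positivity, fun y hy r hr => ?_⟩
  have hy0 : 0 < y := by linarith [le_max_right X₀ 1]
  have hpow : ∀ k : ℕ, f (2 ^ k * y) ≤ ((2 : ℝ) ^ k) ^ γ * f y := by
    intro k
    induction k with
    | zero => simp
    | succ k ih =>
      have hk : y ≤ 2 ^ k * y := le_mul_of_one_le_left hy0.le (one_le_pow₀ one_le_two)
      have h1 := hX₀ (2 ^ k * y) (by linarith [le_max_left X₀ 1])
      rw [div_lt_iff₀ (hpos _ (by positivity))] at h1
      calc f (2 ^ (k + 1) * y) = f (2 * (2 ^ k * y)) := by ring_nf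
        _ ≤ 2 ^ γ * f (2 ^ k * y) := h1.le
        _ ≤ 2 ^ γ * (((2 : ℝ) ^ k) ^ γ * f y) := by gcongr
        _ = ((2 : ℝ) ^ (k + 1)) ^ γ * f y := by
          rw [pow_succ, Real.mul_rpow (by positivity) (by positivity)]; ring
  obtain ⟨k, hk1, hk2⟩ := exists_nat_pow_near hr one_lt_two
  have hfy := hpos y hy0
  calc f (r * y) ≤ f (2 ^ (k + 1) * y) :=
        hmono (mem_Ioi.2 (by positivity)) (mem_Ioi.2 (by positivity)) (by gcongr)
    _ ≤ ((2 : ℝ) ^ (k + 1)) ^ γ * f y := hpow _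
    _ ≤ (2 * r) ^ γ * f y := by
        gcongr
        rw [pow_succ]; linarith

/-- Polynomial growth of monotone functions with a doubling limit. -/
lemma SRT.exists_polynomial_bound {f : ℝ → ℝ} {p γ : ℝ} (hmono : MonotoneOn f (Ioi 0))
    (hpos : ∀ x > 0, 0 < f x)
    (hlim : Tendsto (fun x => f (2 * x) / f x) atTop (nhds ((2 : ℝ) ^ p)))
    (hpγ : p < γ) (hγ : 0 ≤ γ) :
    ∃ C > 0, ∀ᶠ x in atTop, f x ≤ C * x ^ γ := by
  obtain ⟨X, hX, hb⟩ := exists_potter_bound hmono hpos hlim hpγ hγ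
  have := hpos X hX
  refine ⟨(2 / X) ^ γ * f X, by positivity, ?_⟩
  filter_upwards [eventually_ge_atTop X] with x hx
  have hx0 : 0 < x := hX.trans_le hx
  have h1 := hb X le_rfl (x / X) ((one_le_div hX).2 hx)
  rw [div_mul_cancel₀ _ hX.ne', show 2 * (x / X) = 2 / X * x by ring,
    Real.mul_rpow (by positivity) hx0.le] at h1
  linarith

lemma SRT.rtail_antitone (F : Measure ℝ) [IsFiniteMeasure F] : Antitone (rtail F) :=
  fun _ _ hxy => measureReal_mono (Ioi_subset_Ioi hxy)

lemma SRT.RightTail.rtail_pos {F : Measure ℝ} [IsFiniteMeasure F] {ℓ : ℝ → ℝ}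
    (hRT : RightTail F ℓ) (x : ℝ) : 0 < rtail F x := by
  obtain ⟨y, hy, hxy⟩ :=
    ((hRT.eventually_const_lt zero_lt_one).and (eventually_ge_atTop x)).exists
  have h0 : 0 ≤ rtail F y := ENNReal.toReal_nonneg
  have : 0 < rtail F y := h0.lt_of_ne fun h => by simp [← h] at hy
  exact this.trans_le (rtail_antitone F hxy)

lemma SRT.RightTail.tendsto_rtail_ratio {F : Measure ℝ} [IsFiniteMeasure F] {ℓ : ℝ → ℝ} {α : ℝ}
    (hRT : RightTail F ℓ) (hℓ : RegVary ℓ α) :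
    Tendsto (fun x => (rtail F (2 * x))⁻¹ / (rtail F x)⁻¹) atTop (nhds ((2 : ℝ) ^ α)) := by
  have h2 : Tendsto (fun x : ℝ => 2 * x) atTop atTop :=
    tendsto_id.const_mul_atTop two_pos
  have h := (hRT.div (hRT.comp h2) one_ne_zero).mul (hℓ.2 2 two_pos)
  rw [div_one, one_mul] at h
  refine h.congr' ?_
  filter_upwards [eventually_gt_atTop 0] with x hx
  have h1 := hℓ.1 x hx
  have h3 := hℓ.1 (2 * x) (by positivity)
  have h4 := hRT.rtail_pos x
  have h5 := hRT.rtail_pos (2 * x)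
  simp only [Pi.div_apply, Function.comp_apply]
  field_simp

/-- Proposition 1.4, part 2: a priori lower bound on the
cut-off `L`, general case. -/
theorem L_prior_two
    (F : Measure ℝ) [IsProbabilityMeasure F] (α h : ℝ) (ℓ : ℝ → ℝ)
    (hα : α ∈ Set.Ioc (0:ℝ) (1/2)) (hℓ : RegVary ℓ α)
    (hRT : RightTail F ℓ) (hspan : SpanOK F h)
    (β : ℝ) (hβ : 1 - 2 * α ≤ β ∧ β ≤ 1)
    (M : ℝ → ℝ) (hMmono : MonotoneOn M (Set.Ioi 0)) (hMreg : RegVary M β)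
    (hω : (fun x => omegaFn F h x) =O[atTop] fun x => x / M x)
    (hMo : (fun x => x / M x) =o[atTop] fun x => ℓ x ^ 2) :
    ∀ ε : ℝ, 0 < ε → ε < 1 / (1 + α + β) →
    ∀ θ > (0:ℝ), ∀ L : ℝ → ℝ, MonotoneOn L (Set.Ioi 0) → RegVaryAny L →
      Tendsto L atTop atTop →
      ((fun x => L x) =O[atTop] fun x => (ℓ x * Real.sqrt (M x / x)) ^ ε) →
      Tendsto (fun x => (x / ℓ x) * ∑ n ∈ Finset.range ⌈L x⌉₊,
          sSup ((fun t => ((convPow F n) (Set.Ioc t (t + h))).toReal) ''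
            Set.Ici (θ * x)))
        atTop (nhds 0) := by
  intro ε hε0 hε θ hθ L _ _ hLtop hLO
  obtain ⟨hα0, hα1⟩ := hα
  obtain ⟨hβ0, hβ1⟩ := hβ
  have hh : 0 < h := hspan.1
  have hαβ : 0 < α + β := by linarith
  have htail : ∀ x, 0 < rtail F x := hRT.rtail_pos
  have htail_mono : MonotoneOn (fun x => (rtail F x)⁻¹) (Ioi 0) := fun x _ y _ hxy =>
    inv_anti₀ (htail y) (rtail_antitone F hxy)
  set f : ℝ → ℝ := fun x => M x * (rtail F x)⁻¹ with hf
  have hfpos : ∀ x > 0, 0 < f x := fun x hx => mul_pos (hMreg.1 x hx) (inv_pos.2 (htail x))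
  have hfmono : MonotoneOn f (Ioi 0) := fun x hx y hy hxy =>
    mul_le_mul (hMmono hx hy hxy) (htail_mono hx hy hxy) (inv_pos.2 (htail x)).le
      (hMreg.1 y hy).le
  have hflim : Tendsto (fun x => f (2 * x) / f x) atTop (nhds ((2 : ℝ) ^ (α + β))) := by
    rw [add_comm, Real.rpow_add two_pos]
    refine ((hMreg.2 2 two_pos).mul (hRT.tendsto_rtail_ratio hℓ)).congr fun x => ?_
    rw [div_mul_div_comm]
  set γ : ℝ := 2 * (α + β) with hγ
  have hγ0 : 0 < γ := by positivity
  obtain ⟨X, hX, hpotter⟩ :=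
    exists_potter_bound hfmono hfpos hflim (show α + β < γ by linarith) hγ0.le
  -- local bound on `F`
  obtain ⟨C, hC, hωC⟩ := hω.exists_pos
  obtain ⟨X₁, hX₁⟩ := eventually_atTop.1 hωC.bound
  have hlocal : ∀ s, max X₁ X ≤ s → (F (Ioc s (s + h))).toReal ≤ C / f s := by
    intro s hs
    have hs0 : 0 < s := hX.trans_le ((le_max_right _ _).trans hs)
    have hb := hX₁ s ((le_max_left _ _).trans hs)
    have hM := hMreg.1 s hs0
    have ht := htail s
    rw [Real.norm_of_nonneg (by unfold omegaFn; positivity), Real.norm_of_nonneg (by positivity),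
      omegaFn, div_le_iff₀ ht] at hb
    refine le_of_mul_le_mul_left (hb.trans_eq ?_) hs0
    simp only [hf]
    field_simp
  -- growth of `g₀`
  set g : ℝ → ℝ := fun x => ℓ x * √(M x / x) with hg
  have hgpos : ∀ x > 0, 0 < g x := fun x hx =>
    mul_pos (hℓ.1 x hx) (Real.sqrt_pos.2 (div_pos (hMreg.1 x hx) hx))
  have hgsq : ∀ x > 0, g x ^ 2 = ℓ x ^ 2 * (M x / x) := fun x hx => by
    rw [hg]
    simp only
    rw [mul_pow, Real.sq_sqrt (div_pos (hMreg.1 x hx) hx).le]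
  have hgtop : Tendsto g atTop atTop := by
    have h1 := hMo.tendsto_div_nhds_zero
    have h2 : Tendsto (fun x => (g x ^ 2)⁻¹) atTop (nhds 0) := by
      refine h1.congr' ?_
      filter_upwards [eventually_gt_atTop 0] with x hx
      have := hℓ.1 x hx
      have := hMreg.1 x hx
      rw [hgsq x hx]
      field_simp
    have h3 : Tendsto (fun x => (g x ^ 2)⁻¹) atTop (nhdsWithin 0 (Ioi 0)) := by
      refine tendsto_nhdsWithin_of_tendsto_nhds_of_eventually_within _ h2 ?_
      filter_upwards [eventually_gt_atTop 0] with x hx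
      have := hgpos x hx
      exact mem_Ioi.2 (by positivity)
    refine (Real.tendsto_sqrt_atTop.comp h3.inv_tendsto_nhdsGT_zero).congr' ?_
    filter_upwards [eventually_gt_atTop 0] with x hx
    simp [Real.sqrt_sq (hgpos x hx).le]
  obtain ⟨C₁, hC₁, hL₁⟩ := hLO.exists_pos
  have hLg : ∀ᶠ x in atTop, L x ≤ C₁ * g x ^ ε := by
    filter_upwards [hL₁.bound, eventually_gt_atTop 0] with x hx hx0
    have := hgpos x hx0
    rw [Real.norm_of_nonneg (by positivity : 0 ≤ (ℓ x * √(M x / x)) ^ ε)] at hx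
    exact (le_abs_self _).trans hx
  have hℓtail : ∀ᶠ x in atTop, rtail F x * ℓ x ≤ 2 :=
    (hRT.eventually_lt_const one_lt_two).mono fun x hx => hx.le
  have hℓtail' : ∀ᶠ x in atTop, ℓ x ≤ 2 * (rtail F x)⁻¹ :=
    hℓtail.mono fun x hx => by
      rw [← div_eq_mul_inv, le_div_iff₀ (htail x)]
      linarith
  have hε1 : ε < 1 := hε.trans_le (by rw [div_le_one (by linarith)]; linarith)
  have hLx : Tendsto (fun x => x / L x) atTop atTop := by
    obtain ⟨A, hA, hAb⟩ := exists_polynomial_bound htail_mono (fun x _ => inv_pos.2 (htail x))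
      (hRT.tendsto_rtail_ratio hℓ) (show α < 1 by linarith) zero_le_one
    obtain ⟨B, hB, hBb⟩ := exists_polynomial_bound hfmono hfpos hflim
      (show α + β < 2 by linarith) zero_le_two
    have hlow : Tendsto (fun x : ℝ => (C₁ * √(4 * A * B) ^ ε)⁻¹ * x ^ (1 - ε)) atTop atTop :=
      (tendsto_rpow_atTop (sub_pos.2 hε1)).const_mul_atTop (by positivity)
    refine tendsto_atTop_mono' _ ?_ hlow
    filter_upwards [hAb, hBb, hLg, hℓtail', eventually_gt_atTop 0,
      hLtop.eventually_gt_atTop 0] with x hxA hxB hxL hxℓ hx0 hL0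
    have hg0 := hgpos x hx0
    have hl0 := hℓ.1 x hx0
    have hM0 := hMreg.1 x hx0
    have ht0 := htail x
    have hgx : g x ≤ √(4 * A * B) * x := by
      refine (abs_le_of_sq_le_sq' ?_ (by positivity)).2
      rw [hgsq x hx0, mul_pow, Real.sq_sqrt (by positivity)]
      rw [Real.rpow_one] at hxA
      rw [Real.rpow_two] at hxB
      calc ℓ x ^ 2 * (M x / x) ≤ (2 * (rtail F x)⁻¹) ^ 2 * (M x / x) := by gcongr
        _ = 4 * (rtail F x)⁻¹ * f x / x := by simp only [hf]; ring
        _ ≤ 4 * (A * x) * (B * x ^ 2) / x := by gcongr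
        _ = 4 * A * B * x ^ 2 := by field_simp
    have hLle : L x ≤ C₁ * √(4 * A * B) ^ ε * x ^ ε := by
      refine hxL.trans ?_
      rw [mul_assoc, ← Real.mul_rpow (by positivity) hx0.le]
      gcongr
    rw [Real.rpow_sub hx0, Real.rpow_one, le_div_iff₀ hL0]
    calc _ ≤ (C₁ * √(4 * A * B) ^ ε)⁻¹ * (x / x ^ ε) * (C₁ * √(4 * A * B) ^ ε * x ^ ε) := by
          gcongr
      _ = x := by field_simp
  -- the estimate for one summand
  set K : ℝ := 2 * (2 / θ + 1) with hK
  have hK0 : 0 < K := by positivity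
  have hterm : ∀ᶠ x in atTop, ∀ n ∈ Finset.range ⌈L x⌉₊,
      sSup ((fun t => ((convPow F n) (Ioc t (t + h))).toReal) '' Ici (θ * x)) ≤
        L x * (C * (K * L x) ^ γ / f x) := by
    filter_upwards [hLx.eventually_ge_atTop (2 / θ * max (max X₁ X) h),
      eventually_gt_atTop 0, hLtop.eventually_gt_atTop 0] with x hx hx0 hL0 n hn
    have hnL : (n : ℝ) < L x := Nat.lt_ceil.1 (Finset.mem_range.1 hn)
    have hfx := hfpos x hx0
    have hrhs : 0 ≤ L x * (C * (K * L x) ^ γ / f x) := by positivity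
    refine csSup_le (nonempty_Ici.image _) ?_
    rintro _ ⟨t, ht, rfl⟩
    rw [mem_Ici] at ht
    rcases Nat.eq_zero_or_pos n with rfl | hn0
    · have h0 := convPow_Ioc_le F h 0 ⊤ (fun _ _ => le_top) 0 t
        (by simpa using (mul_pos hθ hx0).le.trans ht)
      have h1 : convPow F 0 (Ioc t (t + h)) = 0 := by simpa using h0
      simpa [h1] using hrhs
    have hn1 : (1 : ℝ) ≤ n := by exact_mod_cast hn0
    have hnpos : (0 : ℝ) < n := by linarith
    set y : ℝ := θ * x / (2 * n) with hy
    have hymax : max (max X₁ X) h ≤ y := by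
      have h1 : 2 / θ * max (max X₁ X) h ≤ x / n :=
        hx.trans (by gcongr)
      have h2 : y = θ / 2 * (x / n) := by rw [hy]; field_simp
      rw [h2]
      calc max (max X₁ X) h = θ / 2 * (2 / θ * max (max X₁ X) h) := by field_simp
        _ ≤ _ := by gcongr
    have hyX : max X₁ X ≤ y := (le_max_left _ _).trans hymax
    have hyh : h ≤ y := (le_max_right _ _).trans hymax
    have hy0 : 0 < y := hh.trans_le hyh
    have hr : 1 ≤ (2 / θ + 1) * n := by
      have : 0 < 2 / θ := by positivity
      nlinarith
    have hfxy : f x ≤ (K * L x) ^ γ * f y := by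
      have hfy := hfpos y hy0
      have hxy : x ≤ (2 / θ + 1) * n * y := by
        have : (2 / θ + 1) * n * y = x + θ * x / 2 := by rw [hy]; field_simp
        rw [this]
        have : 0 < θ * x := by positivity
        linarith
      calc f x ≤ f ((2 / θ + 1) * n * y) := hfmono hx0 (hx0.trans_le hxy) hxy
        _ ≤ (2 * ((2 / θ + 1) * n)) ^ γ * f y :=
          hpotter y ((le_max_right _ _).trans hyX) _ hr
        _ ≤ (K * L x) ^ γ * f y := by
          rw [← mul_assoc 2, ← hK]
          gcongr
    have hbound : ∀ s, θ * x / n - h ≤ s →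
        F (Ioc s (s + h)) ≤ ENNReal.ofReal (C * (K * L x) ^ γ / f x) := by
      intro s hs
      have hys : y ≤ s := by
        have : θ * x / n = 2 * y := by rw [hy]; field_simp
        linarith
      have hfy := hfpos y hy0
      rw [← ENNReal.ofReal_toReal (measure_ne_top F (Ioc s (s + h)))]
      refine ENNReal.ofReal_le_ofReal ((hlocal s (hyX.trans hys)).trans ?_)
      calc C / f s ≤ C / f y := by
            gcongr
            exact hfmono hy0 (hy0.trans_le hys) hys
        _ ≤ C * (K * L x) ^ γ / f x := by
            rw [div_le_div_iff₀ hfy hfx, mul_assoc]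
            gcongr
    have hconv := convPow_Ioc_le F h (θ * x / n) _ hbound n t
      (by rwa [mul_div_cancel₀ _ hnpos.ne'])
    have hreal := ENNReal.toReal_mono (by finiteness) hconv
    rw [ENNReal.toReal_mul, ENNReal.toReal_natCast, ENNReal.toReal_ofReal (by positivity)]
      at hreal
    exact hreal.trans (by gcongr)
  -- conclusion
  have hexp : ε * (2 + γ) - 2 < 0 := by
    rw [lt_div_iff₀ (by linarith)] at hε
    rw [hγ]
    linarith
  have hlim : Tendsto (fun x => 4 * C * K ^ γ * C₁ ^ (2 + γ) * g x ^ (ε * (2 + γ) - 2)) atTop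
      (nhds 0) := by
    have h1 := ((tendsto_rpow_neg_atTop (neg_pos.2 hexp)).comp hgtop).const_mul
      (4 * C * K ^ γ * C₁ ^ (2 + γ))
    simpa [Function.comp_def] using h1
  refine squeeze_zero' ?_ ?_ hlim
  · filter_upwards [eventually_gt_atTop 0] with x hx0
    have := hℓ.1 x hx0
    refine mul_nonneg (by positivity) (Finset.sum_nonneg fun n _ => Real.sSup_nonneg ?_)
    rintro _ ⟨t, _, rfl⟩
    exact ENNReal.toReal_nonneg
  · filter_upwards [hterm, eventually_gt_atTop 0, hLtop.eventually_ge_atTop 1, hLg, hℓtail]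
      with x hxt hx0 hL1 hxL hxℓ
    have hl0 := hℓ.1 x hx0
    have hM0 := hMreg.1 x hx0
    have ht0 := htail x
    have hg0 := hgpos x hx0
    have hfx := hfpos x hx0
    have hL0 : 0 < L x := by linarith
    have hceil : (⌈L x⌉₊ : ℝ) ≤ 2 * L x := by linarith [Nat.ceil_lt_add_one hL0.le]
    have hsum := Finset.sum_le_card_nsmul _ _ _ hxt
    rw [Finset.card_range, nsmul_eq_mul] at hsum
    have hquot : x / ℓ x / f x ≤ 2 / g x ^ 2 := by
      rw [hgsq x hx0]
      simp only [hf]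
      calc x / ℓ x / (M x * (rtail F x)⁻¹) = (rtail F x * ℓ x) / (ℓ x ^ 2 * (M x / x)) := by
            field_simp
        _ ≤ 2 / (ℓ x ^ 2 * (M x / x)) := by gcongr
    calc _ ≤ x / ℓ x * (2 * L x * (L x * (C * (K * L x) ^ γ / f x))) := by
          gcongr
          exact hsum.trans (by gcongr)
      _ = 2 * C * K ^ γ * (L x ^ (2 + γ)) * (x / ℓ x / f x) := by
          rw [Real.mul_rpow hK0.le hL0.le, Real.rpow_add hL0, Real.rpow_two]
          ring
      _ ≤ 2 * C * K ^ γ * ((C₁ * g x ^ ε) ^ (2 + γ)) * (2 / g x ^ 2) := by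
          gcongr
      _ = _ := by
          rw [Real.mul_rpow hC₁.le (by positivity), ← Real.rpow_mul hg0.le,
            Real.rpow_sub hg0, Real.rpow_two]
          ring
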